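/- Let S be an AG-groupoid and f an (∈,∈∨q)-fuzzy bi-ideal of S. Then (f ∘₀.₅ 1) ∘₀.₅ f ⊆ f, i.e., ((f ∘₀.₅ 1) ∘₀.₅ f)(a) ≤ f(a) for all a ∈ S. -/

import Mathlib

/-- An AG-groupoid: a magma satisfying the left invertive law `(ab)c = (cb)a`. -/
def LeftInvertive (S : Type*) [Mul S] : Prop := ∀ a b c : S, a * b * c = c * b * a

/-- A fuzzy subset: a function into `[0,1]`. -/
def IsFuzzy {S : Type*} (f : S → ℝ) : Prop := ∀ x, 0 ≤ f x ∧ f x ≤ 1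

/-- An `(∈,∈∨q)`-fuzzy bi-ideal of an AG-groupoid. -/
def FuzzyBiIdealQ {S : Type*} [Mul S] (f : S → ℝ) : Prop :=
  (∀ x y : S, min (min (f x) (f y)) (1 / 2) ≤ f (x * y)) ∧
  (∀ x y z : S, min (min (f x) (f z)) (1 / 2) ≤ f (x * y * z))

/-- The `0.5`-product of fuzzy subsets. -/
noncomputable def prod05 {S : Type*} [Mul S] (f g : S → ℝ) (a : S) : ℝ :=
  sSup {v : ℝ | ∃ b c : S, a = b * c ∧ v = min (min (f b) (g c)) (1 / 2)}

/-- The constant fuzzy subset `1`. -/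
def fuzzyOne (S : Type*) : S → ℝ := fun _ => 1

section Mul

variable {S : Type*} [Mul S] {f g h : S → ℝ} {a : S} {r : ℝ}

-- `0 ≤ r` covers the elements without a factorization, where `sSup ∅ = 0`.
theorem prod05_le (hr : 0 ≤ r)
    (hfg : ∀ x y, x * y = a → min (min (f x) (g y)) (1 / 2) ≤ r) : prod05 f g a ≤ r := by
  refine Real.sSup_le ?_ hr
  rintro _ ⟨x, y, hxy, rfl⟩
  exact hfg x y hxy.symm

theorem prod05_prod05_le (hr : 0 ≤ r)
    (hfgh : ∀ x y z, x * y * z = a → min (min (min (f x) (g y)) (h z)) (1 / 2) ≤ r) :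
    prod05 (prod05 f g) h a ≤ r := by
  refine prod05_le hr fun b z hbz => ?_
  -- `min u v ≤ r` is a disjunction in a linear order, so `min` passes through the inner supremum.
  rw [min_assoc, min_le_iff, or_iff_not_imp_right]
  intro hz
  refine prod05_le hr fun x y hxy => min_le_of_left_le ?_
  have hxyz : min (min (f x) (g y)) (min (h z) (1 / 2)) ≤ r := by
    rw [← min_assoc]
    exact hfgh x y z (by rw [hxy, hbz])
  exact (min_le_iff.mp hxyz).resolve_right hz

theorem prod05_one_prod05_le_general (hf : ∀ x, 0 ≤ f x)
    (hbi : ∀ x y z, min (min (f x) (f z)) (1 / 2) ≤ f (x * y * z)) (g : S → ℝ) (a : S) :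
    prod05 (prod05 f g) f a ≤ f a := by
  refine prod05_prod05_le (hf a) ?_
  rintro x y z rfl
  calc
    min (min (min (f x) (g y)) (f z)) (1 / 2) ≤ min (min (f x) (f z)) (1 / 2) := by
      gcongr
      exact min_le_left _ _
    _ ≤ f (x * y * z) := hbi x y z

end Mul

/-- if `f` is an `(∈,∈∨q)`-fuzzy bi-ideal of `S`, then
`(f ∘₀.₅ 1) ∘₀.₅ f ⊆ f`. -/
theorem prod05_one_prod05_le {S : Type*} [Mul S] (hS : LeftInvertive S)
    (f : S → ℝ) (hf : IsFuzzy f) (hbi : FuzzyBiIdealQ f) :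
    ∀ a : S, prod05 (prod05 f (fuzzyOne S)) f a ≤ f a :=
  prod05_one_prod05_le_general (fun x => (hf x).1) hbi.2 (fuzzyOne S)
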